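/- Let n ≥ 2, K ∈ C_e^n, and let x be a boundary point of K. Then there exists u₀ ∈ S^{n-1} such that [x, u₀] = c_K(u₀), where c_K(u) = max_{y ∈ K} [u,y]; that is, every boundary point of K lies on some supporting cylinder of K. -/

import Mathlib

/-!
A point `z ∉ K` lies outside one of the cylinders `C⁻(u,r) ⊇ K` cutting out `K`, so
`[y,u] ≤ r < [z,u]` for all `y ∈ K`. The set of pairs `(z,u)` with `u` in the unit sphere and
`[u,y] ≤ [z,u]` for all `y ∈ K` is closed, and since the sphere is compact, so is its projection
to the `z` coordinate. This projection contains the complement of `K`, hence its closure, hence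
every boundary point `x`. As `K` is closed, `x ∈ K`, so `x` itself attains the maximum `c_K(u)`.
-/

open MeasureTheory Metric Set
open scoped RealInnerProductSpace ENNReal

noncomputable section

/-- `[x,y]`: the area of the parallelogram spanned by `x` and `y`. -/
def sinePair {n : ℕ} (x y : EuclideanSpace ℝ (Fin n)) : ℝ :=
  Real.sqrt (‖x‖ ^ 2 * ‖y‖ ^ 2 - ⟪x, y⟫ ^ 2)

/-- `ω_q = π^{q/2}/Γ(1+q/2)`. -/
def omegaVol (q : ℝ) : ℝ := Real.pi ^ (q / 2) / Real.Gamma (1 + q / 2)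

/-- The rotation invariant probability measure on the unit sphere `S^{n-1}`. -/
def sphereProb (n : ℕ) : Measure (sphere (0 : EuclideanSpace ℝ (Fin n)) 1) :=
  ((volume : Measure (EuclideanSpace ℝ (Fin n))).toSphere univ)⁻¹ •
    (volume : Measure (EuclideanSpace ℝ (Fin n))).toSphere

/-- The radial function of a set star-shaped about the origin. -/
def radialFn {n : ℕ} (K : Set (EuclideanSpace ℝ (Fin n))) (u : EuclideanSpace ℝ (Fin n)) : ℝ :=
  sSup {r : ℝ | 0 ≤ r ∧ r • u ∈ K}

/-- `K` is star-shaped about the origin. -/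
def IsStarShaped {n : ℕ} (K : Set (EuclideanSpace ℝ (Fin n))) : Prop :=
  0 ∈ K ∧ ∀ x ∈ K, ∀ t : ℝ, 0 ≤ t → t ≤ 1 → t • x ∈ K

/-- `K` is a star body: star-shaped about the origin, with radial function positive and
continuous on the unit sphere, and `K = {r • u : u ∈ S^{n-1}, 0 ≤ r ≤ ρ_K(u)}`. -/
def IsStarBody {n : ℕ} (K : Set (EuclideanSpace ℝ (Fin n))) : Prop :=
  IsStarShaped K ∧
  (∀ u ∈ sphere (0 : EuclideanSpace ℝ (Fin n)) 1, 0 < radialFn K u) ∧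
  ContinuousOn (radialFn K) (sphere (0 : EuclideanSpace ℝ (Fin n)) 1) ∧
  ∀ u ∈ sphere (0 : EuclideanSpace ℝ (Fin n)) 1, ∀ r : ℝ, 0 ≤ r →
    (r • u ∈ K ↔ r ≤ radialFn K u)

/-- The constant `c̃_{n,p}`. -/
def tildeC (n : ℕ) (p : ℝ) : ℝ :=
  ((n : ℝ) - 1) * omegaVol ((n : ℝ) - 1) * omegaVol ((n : ℝ) + p - 2) /
    (((n : ℝ) + p) * omegaVol (n : ℝ) * omegaVol ((n : ℝ) + p - 3))

/-- The polar body `Λ_p°K` of the `L_p`-sine centroid body of `K`. -/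
def sineCentroidPolar (n : ℕ) (p : ℝ) (K : Set (EuclideanSpace ℝ (Fin n))) :
    Set (EuclideanSpace ℝ (Fin n)) :=
  {x | ∫ y in K, sinePair x y ^ p ≤ tildeC n p * (volume K).toReal}

/-- The sine polar body `K^◇`. -/
def sinePolar {n : ℕ} (K : Set (EuclideanSpace ℝ (Fin n))) : Set (EuclideanSpace ℝ (Fin n)) :=
  {x | ∀ y ∈ K, sinePair x y ≤ 1}

/-- The closed solid cylinder `C⁻(u,r)`. -/
def solidCylinder {n : ℕ} (u : EuclideanSpace ℝ (Fin n)) (r : ℝ) :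
    Set (EuclideanSpace ℝ (Fin n)) := {x | sinePair x u ≤ r}

/-- `K ∈ C_e^n`: an origin-symmetric convex body that is an intersection of closed solid
cylinders. -/
def IsCylBody {n : ℕ} (K : Set (EuclideanSpace ℝ (Fin n))) : Prop :=
  IsCompact K ∧ Convex ℝ K ∧ (interior K).Nonempty ∧ (∀ x ∈ K, -x ∈ K) ∧
  ∃ I : Set (EuclideanSpace ℝ (Fin n) × ℝ),
    (∀ c ∈ I, c.1 ∈ sphere (0 : EuclideanSpace ℝ (Fin n)) 1 ∧ 0 < c.2) ∧
    K = ⋂ c ∈ I, solidCylinder c.1 c.2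

/-- The cylindrical hull of a set. -/
def cylHull {n : ℕ} (E : Set (EuclideanSpace ℝ (Fin n))) : Set (EuclideanSpace ℝ (Fin n)) :=
  ⋂ c ∈ {c : EuclideanSpace ℝ (Fin n) × ℝ |
      c.1 ∈ sphere (0 : EuclideanSpace ℝ (Fin n)) 1 ∧ 0 < c.2 ∧ E ⊆ solidCylinder c.1 c.2},
    solidCylinder c.1 c.2

/-- The cylindrical support function `c_K`. -/
def cylSupport {n : ℕ} (K : Set (EuclideanSpace ℝ (Fin n))) (x : EuclideanSpace ℝ (Fin n)) : ℝ :=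
  sSup ((fun y => sinePair x y) '' K)

/-- The support function `h_K`. -/
def suppFn {n : ℕ} (K : Set (EuclideanSpace ℝ (Fin n))) (x : EuclideanSpace ℝ (Fin n)) : ℝ :=
  sSup ((fun y => ⟪x, y⟫) '' K)

lemma sinePair_comm {n : ℕ} (x y : EuclideanSpace ℝ (Fin n)) : sinePair x y = sinePair y x := by
  unfold sinePair
  rw [real_inner_comm, mul_comm]

/-- The projection to the first factor of the closed set of pairs `(z,u)`, with `u` in the unit
sphere and `[u,y] ≤ [z,u]` for all `y ∈ K`, is closed because the sphere is compact. -/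
lemma isClosed_dominating {n : ℕ} (K : Set (EuclideanSpace ℝ (Fin n))) :
    IsClosed {z : EuclideanSpace ℝ (Fin n) | ∃ u : sphere (0 : EuclideanSpace ℝ (Fin n)) 1,
      ∀ y ∈ K, sinePair u.1 y ≤ sinePair z u.1} := by
  have hS : IsClosed {p : EuclideanSpace ℝ (Fin n) × sphere (0 : EuclideanSpace ℝ (Fin n)) 1 |
      ∀ y ∈ K, sinePair p.2.1 y ≤ sinePair p.1 p.2.1} := by
    simp only [setOf_forall]
    refine isClosed_iInter fun y => isClosed_iInter fun _ => isClosed_le ?_ ?_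
    · unfold sinePair; fun_prop
    · unfold sinePair; fun_prop
  convert isClosedMap_fst_of_compactSpace _ hS using 1
  ext z
  simp

/-- every boundary point of `K ∈ C_e^n` lies on some supporting cylinder. -/
theorem frontier_mem_supporting_cylinder {n : ℕ} (hn : 2 ≤ n)
    {K : Set (EuclideanSpace ℝ (Fin n))} (hK : IsCylBody K)
    {x : EuclideanSpace ℝ (Fin n)} (hx : x ∈ frontier K) :
    ∃ u₀ ∈ sphere (0 : EuclideanSpace ℝ (Fin n)) 1, sinePair x u₀ = cylSupport K u₀ := by
  obtain ⟨hcomp, -, -, -, I, hI, hKI⟩ := hK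
  have hxK : x ∈ K := hcomp.isClosed.frontier_subset hx
  rw [frontier_eq_closure_inter_closure] at hx
  have hsub : Kᶜ ⊆ {z : EuclideanSpace ℝ (Fin n) |
      ∃ u : sphere (0 : EuclideanSpace ℝ (Fin n)) 1,
        ∀ y ∈ K, sinePair u.1 y ≤ sinePair z u.1} := by
    intro z hz
    have hz' : ∃ c ∈ I, z ∉ solidCylinder c.1 c.2 := by
      by_contra! h
      exact hz (hKI ▸ mem_iInter₂.2 h)
    obtain ⟨c, hc, hzc⟩ := hz'
    refine ⟨⟨c.1, (hI c hc).1⟩, fun y hy => ?_⟩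
    rw [hKI] at hy
    have hyc : sinePair y c.1 ≤ c.2 := mem_iInter₂.1 hy c hc
    have hzc' : c.2 < sinePair z c.1 := not_le.1 hzc
    rw [sinePair_comm]
    exact hyc.trans hzc'.le
  obtain ⟨u, hu⟩ := closure_minimal hsub (isClosed_dominating K) hx.2
  refine ⟨u.1, u.2, ?_⟩
  have hmax : IsGreatest ((fun y => sinePair u.1 y) '' K) (sinePair x u.1) :=
    ⟨⟨x, hxK, sinePair_comm _ _⟩, by rintro _ ⟨y, hy, rfl⟩; exact hu y hy⟩
  exact hmax.csSup_eq.symm
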